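/- Let k ≥ 2 be an integer and define the polynomial W_k(z) = ((2π)^{2k−1} 2^{2k}/(2k)!) ∑_{j=0}^{k} (−1)^j B_{2j} B_{2k−2j} (1−2^{1−2j})(1−2^{1−2k+2j}) C(2k,2j) z^{2j}. Then every complex root of W_k lies on the unit circle (has absolute value 1), and all roots of W_k are simple. -/

import Mathlib

/-- The polynomial
`W_k(z) = ((2π)^{2k−1} 2^{2k}/(2k)!) ∑_{j=0}^{k} (−1)^j B_{2j} B_{2k−2j}
(1−2^{1−2j})(1−2^{1−2k+2j}) C(2k,2j) z^{2j}`, viewed as a polynomial over `ℂ`. -/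
noncomputable def Wpoly (k : ℕ) : Polynomial ℂ :=
  Polynomial.C ((((2 * Real.pi) ^ (2 * k - 1) * 2 ^ (2 * k) / (Nat.factorial (2 * k))) : ℝ) : ℂ) *
    ∑ j ∈ Finset.range (k + 1),
      Polynomial.C ((-1 : ℂ) ^ j * ((bernoulli (2 * j) : ℚ) : ℂ)
        * ((bernoulli (2 * k - 2 * j) : ℚ) : ℂ)
        * (1 - (2 : ℂ) ^ (1 - 2 * (j : ℤ))) * (1 - (2 : ℂ) ^ (1 - 2 * (k : ℤ) + 2 * j))
        * ((Nat.choose (2 * k) (2 * j)) : ℂ)) * Polynomial.X ^ (2 * j)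

/-!
Euler's formula for the values `η(2j)` of the Dirichlet eta function turns `W_k(z)` into a nonzero
constant times `P_k(-z²)`, where `P_k(x) = ∑ η(2j) η(2k - 2j) x^j` is palindromic. On the unit
circle `P_k(e^{2iθ}) = e^{ikθ} f(θ)` with `f` a real cosine sum, and summation by parts gives
`2 sin θ f(θ) = 2 a₀ sin((k + 1)θ) - ∑ (a_{j+1} - a_j) sin((2j + 1 - k)θ)`. When the total variation
of the coefficients `a_j` is less than `2 a₀`, the first term decides the sign of `f` at the `k + 1`
points of `(0, π)` where `sin((k + 1)θ) = ±1`; hence `f` has `k` zeros in between and these exhaust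
the roots of `P_k`. As `η(2j)` increases to `1` and is concave in `j`, it is log-concave, so the
coefficients increase up to the middle one, and their total variation is
`2 (a_{⌊k/2⌋} - a₀) < 2 η(2k) - 2 a₀ = 2 a₀`, because `η(0) = 1/2`.
-/

section

open Polynomial hiding bernoulli
open Finset Real
open scoped Nat

/-! ### Sequences -/

section Sequences

variable {a : ℕ → ℝ} {n : ℕ}

lemma sum_range_succ_mul_sub {R : Type*} [CommRing R] (a s : ℕ → R) (n : ℕ) :
    ∑ j ∈ range (n + 1), a j * (s (j + 1) - s j) =
      a n * s (n + 1) - a 0 * s 0 - ∑ j ∈ range n, (a (j + 1) - a j) * s (j + 1) := by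
  induction n with
  | zero => simp [mul_sub]
  | succ n ih =>
    rw [sum_range_succ, ih, sum_range_succ _ n]
    ring

lemma mul_succ_le_succ_mul_of_antitone_sub (ha : ∀ j, 0 ≤ a j) (hmono : Monotone a)
    (hconc : Antitone fun j => a (j + 1) - a j) {j l : ℕ} (hjl : j ≤ l) :
    a j * a (l + 1) ≤ a (j + 1) * a l := by
  have h : a j * (a (l + 1) - a l) ≤ a l * (a (j + 1) - a j) :=
    mul_le_mul (hmono hjl) (hconc hjl) (sub_nonneg.2 (hmono l.le_succ)) (ha l)
  linarith

lemma sum_abs_sub_of_symm_of_le_succ (hsymm : ∀ j ≤ n, a (n - j) = a j)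
    (hinc : ∀ j, 2 * j + 1 ≤ n → a j ≤ a (j + 1)) :
    ∑ j ∈ range n, |a (j + 1) - a j| = 2 * (a (n / 2) - a 0) := by
  have hdec : ∀ j < n, n ≤ 2 * j + 1 → a (j + 1) ≤ a j := by
    intro j hj hnj
    have h := hinc (n - (j + 1)) (by omega)
    rwa [hsymm (j + 1) hj, show n - (j + 1) + 1 = n - j by omega, hsymm j hj.le] at h
  have hleft : ∑ j ∈ range (n / 2), |a (j + 1) - a j| = a (n / 2) - a 0 := by
    rw [← sum_range_sub]
    refine sum_congr rfl fun j hj => abs_of_nonneg (sub_nonneg.2 (hinc j ?_))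
    have := mem_range.1 hj
    omega
  have hright : ∑ j ∈ Ico (n / 2) n, |a (j + 1) - a j| = a (n / 2) - a n := by
    rw [← neg_sub, ← sum_Ico_sub _ (Nat.div_le_self n 2), ← sum_neg_distrib]
    refine sum_congr rfl fun j hj => abs_of_nonpos (sub_nonpos.2 ?_)
    have := mem_Ico.1 hj
    exact hdec j this.2 (by omega)
  have hends : a n = a 0 := hsymm 0 n.zero_le
  rw [← sum_range_add_sum_Ico _ (Nat.div_le_self n 2), hleft, hright, hends]
  ring

end Sequences

/-! ### Palindromic real polynomials on the unit circle -/

section Palindromic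

lemma exists_finset_zeros_of_alternating_sign {α : Type*} [ConditionallyCompleteLinearOrder α]
    [TopologicalSpace α] [OrderTopology α] [DenselyOrdered α] {f : α → ℝ} (hf : Continuous f)
    {x : ℕ → α} (hx : StrictMono x) {n : ℕ} (hsign : ∀ m ≤ n, 0 < (-1) ^ m * f (x m)) :
    ∃ S : Finset α, #S = n ∧ ∀ t ∈ S, t ∈ Set.Ioo (x 0) (x n) ∧ f t = 0 := by
  induction n with
  | zero => exact ⟨∅, by simp⟩
  | succ n ih =>
    obtain ⟨S, hcard, hS⟩ := ih fun m hm => hsign m (hm.trans n.le_succ)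
    have hlt : x n < x (n + 1) := hx n.lt_succ_self
    obtain ⟨t, ht, hft⟩ : ∃ t ∈ Set.Ioo (x n) (x (n + 1)), (-1) ^ n * f t = 0 := by
      have hright := hsign (n + 1) le_rfl
      rw [pow_succ] at hright
      exact intermediate_value_Ioo' hlt.le (hf.const_mul _).continuousOn
        ⟨by linarith, hsign n n.le_succ⟩
    have htS : t ∉ S := fun h => (hS t h).1.2.not_gt ht.1
    refine ⟨insert t S, by rw [card_insert_of_notMem htS, hcard], fun s hs => ?_⟩
    rcases mem_insert.1 hs with rfl | hs
    · exact ⟨⟨(hx.monotone n.zero_le).trans_lt ht.1, ht.2⟩, by simpa using hft⟩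
    · exact ⟨⟨(hS s hs).1.1, (hS s hs).1.2.trans hlt⟩, (hS s hs).2⟩

/-- The cosine sum with `∑ j ≤ n, a j * x ^ j = exp (i n θ) * cosSum a n θ` at `x = exp (2 i θ)`
whenever `a` is palindromic. -/
noncomputable def cosSum (a : ℕ → ℝ) (n : ℕ) (θ : ℝ) : ℝ :=
  ∑ j ∈ range (n + 1), a j * cos ((2 * j - n) * θ)

/-- The `m`-th positive angle `θ` with `sin ((n + 1) * θ) = ± 1`, counted from `m = 0`. -/
noncomputable def sinNode (n m : ℕ) : ℝ := (m + 1 / 2) * π / (n + 1)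

variable {a : ℕ → ℝ} {n : ℕ}

lemma continuous_cosSum : Continuous (cosSum a n) := by
  unfold cosSum
  fun_prop

lemma sinNode_strictMono (n : ℕ) : StrictMono (sinNode n) := by
  intro l m hlm
  unfold sinNode
  gcongr

lemma sinNode_zero_pos (n : ℕ) : 0 < sinNode n 0 := by
  unfold sinNode
  positivity

lemma sinNode_lt_pi {m : ℕ} (hm : m ≤ n) : sinNode n m < π := by
  have hm' : (m : ℝ) ≤ n := by exact_mod_cast hm
  rw [sinNode, div_lt_iff₀ (by positivity), mul_comm]
  exact mul_lt_mul_of_pos_left (by linarith) pi_pos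

lemma sin_succ_mul_sinNode (n m : ℕ) : sin ((n + 1) * sinNode n m) = (-1) ^ m := by
  have h : (n + 1) * sinNode n m = π / 2 + m * π := by
    unfold sinNode
    field_simp
    ring
  rw [h, sin_add_nat_mul_pi, sin_pi_div_two, mul_one]

lemma two_mul_sin_mul_cosSum (hsymm : ∀ j ≤ n, a (n - j) = a j) (θ : ℝ) :
    2 * sin θ * cosSum a n θ = 2 * a 0 * sin ((n + 1) * θ) -
      ∑ j ∈ range n, (a (j + 1) - a j) * sin ((2 * j + 1 - n) * θ) := by
  set s : ℕ → ℝ := fun j => sin ((2 * j - 1 - n) * θ)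
  have s_succ (j : ℕ) : s (j + 1) = sin ((2 * j + 1 - n) * θ) := by
    simp only [s]
    congr 2
    push_cast
    ring
  have s_zero : s 0 = -sin ((n + 1) * θ) := by
    rw [← sin_neg]
    simp only [s]
    congr 1
    push_cast
    ring
  have s_last : s (n + 1) = sin ((n + 1) * θ) := by
    rw [s_succ]
    congr 2
    ring
  have s_sub (j : ℕ) : s (j + 1) - s j = 2 * sin θ * cos ((2 * j - n) * θ) := by
    rw [s_succ, show (2 * j + 1 - n) * θ = (2 * j - n) * θ + θ by ring, sin_add]
    simp only [s]
    rw [show (2 * j - 1 - n) * θ = (2 * j - n) * θ - θ by ring, sin_sub]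
    ring
  have hends : a n = a 0 := hsymm 0 n.zero_le
  calc 2 * sin θ * cosSum a n θ
      = ∑ j ∈ range (n + 1), a j * (s (j + 1) - s j) := by
        simp only [cosSum, mul_sum, s_sub, mul_left_comm]
    _ = a n * s (n + 1) - a 0 * s 0 - ∑ j ∈ range n, (a (j + 1) - a j) * s (j + 1) :=
        sum_range_succ_mul_sub a s n
    _ = _ := by
        simp only [s_succ, s_zero, hends]
        rw [← s_succ n, s_last]
        ring

lemma apply_zero_ne_zero_of_sum_abs_sub_lt
    (hvar : ∑ j ∈ range n, |a (j + 1) - a j| < 2 * |a 0|) : a 0 ≠ 0 := by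
  intro h
  rw [h, abs_zero, mul_zero] at hvar
  exact hvar.not_ge (sum_nonneg fun _ _ => abs_nonneg _)

lemma cosSum_sinNode_sign (hsymm : ∀ j ≤ n, a (n - j) = a j)
    (hvar : ∑ j ∈ range n, |a (j + 1) - a j| < 2 * |a 0|) {m : ℕ} (hm : m ≤ n) :
    0 < (-1) ^ m * (a 0 * cosSum a n (sinNode n m)) := by
  set θ := sinNode n m
  set E := ∑ j ∈ range n, (a (j + 1) - a j) * sin ((2 * j + 1 - n) * θ)
  have hsin : 0 < sin θ := sin_pos_of_pos_of_lt_pi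
    ((sinNode_zero_pos n).trans_le ((sinNode_strictMono n).monotone m.zero_le)) (sinNode_lt_pi hm)
  have hident : 2 * sin θ * cosSum a n θ = 2 * a 0 * (-1) ^ m - E := by
    rw [two_mul_sin_mul_cosSum hsymm, sin_succ_mul_sinNode]
  have hE_lt : |E| < 2 * |a 0| := by
    refine ((abs_sum_le_sum_abs _ _).trans (sum_le_sum fun j _ => ?_)).trans_lt hvar
    rw [abs_mul]
    exact mul_le_of_le_one_right (abs_nonneg _) (abs_sin_le_one _)
  have ha : 0 < |a 0| := abs_pos.2 (apply_zero_ne_zero_of_sum_abs_sub_lt hvar)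
  have hsq : ((-1 : ℝ) ^ m) * (-1) ^ m = 1 := by rw [← mul_pow]; simp
  have herror : (-1) ^ m * a 0 * E < 2 * |a 0| * |a 0| := calc
    (-1) ^ m * a 0 * E ≤ |(-1) ^ m * a 0 * E| := le_abs_self _
    _ = |a 0| * |E| := by simp [abs_mul]
    _ < |a 0| * (2 * |a 0|) := by gcongr
    _ = 2 * |a 0| * |a 0| := by ring
  have hpos : 0 < 2 * sin θ * ((-1) ^ m * (a 0 * cosSum a n θ)) := calc
    0 < 2 * |a 0| * |a 0| - (-1) ^ m * a 0 * E := sub_pos.2 herror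
    _ = (-1) ^ m * a 0 * (2 * a 0 * (-1) ^ m - E) := by
        linear_combination 2 * abs_mul_abs_self (a 0) - 2 * a 0 * a 0 * hsq
    _ = 2 * sin θ * ((-1) ^ m * (a 0 * cosSum a n θ)) := by
        rw [← hident]
        ring
  exact pos_of_mul_pos_right hpos (by positivity)

lemma sum_mul_exp_pow_eq_cosSum (hsymm : ∀ j ≤ n, a (n - j) = a j) (θ : ℝ) :
    ∑ j ∈ range (n + 1), (a j : ℂ) * (Circle.exp (2 * θ) : ℂ) ^ j =
      Circle.exp (n * θ) * (cosSum a n θ : ℂ) := by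
  have hsin : ∑ j ∈ range (n + 1), a j * sin ((2 * j - n) * θ) = 0 := by
    refine self_eq_neg.1 ?_
    conv_lhs => rw [← sum_range_reflect]
    rw [← sum_neg_distrib]
    refine sum_congr rfl fun j hj => ?_
    have hj : j ≤ n := Nat.lt_succ_iff.1 (mem_range.1 hj)
    rw [Nat.add_sub_cancel, hsymm j hj, Nat.cast_sub hj,
      show (2 * ((n : ℝ) - j) - n) * θ = -((2 * j - n) * θ) by ring, sin_neg, mul_neg]
  have hexp (j : ℕ) : (Circle.exp (2 * θ) : ℂ) ^ j = Circle.exp (n * θ) *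
      ((cos ((2 * j - n) * θ) : ℂ) + (sin ((2 * j - n) * θ) : ℂ) * Complex.I) := by
    rw [Complex.ofReal_cos, Complex.ofReal_sin, ← Complex.exp_mul_I, Circle.coe_exp,
      Circle.coe_exp, ← Complex.exp_nat_mul, ← Complex.exp_add]
    push_cast
    ring_nf
  calc ∑ j ∈ range (n + 1), (a j : ℂ) * (Circle.exp (2 * θ) : ℂ) ^ j
      = Circle.exp (n * θ) * ((cosSum a n θ : ℂ) +
          ((∑ j ∈ range (n + 1), a j * sin ((2 * j - n) * θ) : ℝ) : ℂ) * Complex.I) := by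
        simp only [hexp, cosSum]
        push_cast
        rw [sum_mul, ← sum_add_distrib, mul_sum]
        exact sum_congr rfl fun j _ => by ring
    _ = Circle.exp (n * θ) * (cosSum a n θ : ℂ) := by simp [hsin]

variable {p : ℝ[X]}

lemma eval_map_exp_eq_cosSum (hdeg : p.natDegree ≤ n)
    (hsymm : ∀ j ≤ n, p.coeff (n - j) = p.coeff j) (θ : ℝ) :
    (p.map (algebraMap ℝ ℂ)).eval (Circle.exp (2 * θ) : ℂ) =
      Circle.exp (n * θ) * (cosSum p.coeff n θ : ℂ) := by
  rw [← sum_mul_exp_pow_eq_cosSum hsymm, eval_map_algebraMap,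
    aeval_eq_sum_range' (Nat.lt_succ_of_le hdeg)]
  simp only [Complex.real_smul]

theorem exists_finset_roots_eq_of_palindromic (hdeg : p.natDegree ≤ n)
    (hsymm : ∀ j ≤ n, p.coeff (n - j) = p.coeff j)
    (hvar : ∑ j ∈ range n, |p.coeff (j + 1) - p.coeff j| < 2 * |p.coeff 0|) :
    ∃ T : Finset ℂ, (p.map (algebraMap ℝ ℂ)).roots = T.val ∧ ∀ x ∈ T, ‖x‖ = 1 := by
  have hp0 : p.coeff 0 ≠ 0 := apply_zero_ne_zero_of_sum_abs_sub_lt hvar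
  have hp : p ≠ 0 := fun h => hp0 (by rw [h, coeff_zero])
  obtain ⟨S, hcard, hS⟩ := exists_finset_zeros_of_alternating_sign
    (continuous_cosSum.const_mul (p.coeff 0)) (sinNode_strictMono n)
    fun m hm => cosSum_sinNode_sign hsymm hvar hm
  have hS_Ico (θ : ℝ) (hθ : θ ∈ S) : 2 * θ ∈ Set.Ico 0 (2 * π) := by
    obtain ⟨⟨hleft, hright⟩, -⟩ := hS θ hθ
    constructor <;> linarith [sinNode_zero_pos n, sinNode_lt_pi le_rfl (n := n)]
  have hinj : Set.InjOn (fun θ : ℝ => (Circle.exp (2 * θ) : ℂ)) S := by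
    intro θ hθ t ht h
    have := Circle.exp_injOn_Ico (by simp) (hS_Ico θ hθ) (hS_Ico t ht) (Circle.ext h)
    linarith
  refine ⟨S.image fun θ => (Circle.exp (2 * θ) : ℂ),
    roots_eq_of_natDegree_le_card_of_ne_zero ?_ ?_ (Polynomial.map_ne_zero hp), ?_⟩
  · simp only [forall_mem_image]
    intro θ hθ
    have hzero : cosSum p.coeff n θ = 0 := (mul_eq_zero.1 (hS θ hθ).2).resolve_left hp0
    rw [eval_map_exp_eq_cosSum hdeg hsymm, hzero, Complex.ofReal_zero, mul_zero]
  · rw [card_image_of_injOn hinj, hcard]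
    exact natDegree_map_le.trans hdeg
  · simp only [forall_mem_image, Circle.norm_coe, implies_true]

theorem norm_eq_one_and_rootMultiplicity_eq_one_of_palindromic (hdeg : p.natDegree ≤ n)
    (hsymm : ∀ j ≤ n, p.coeff (n - j) = p.coeff j)
    (hvar : ∑ j ∈ range n, |p.coeff (j + 1) - p.coeff j| < 2 * |p.coeff 0|) {x : ℂ}
    (hx : (p.map (algebraMap ℝ ℂ)).IsRoot x) :
    ‖x‖ = 1 ∧ (p.map (algebraMap ℝ ℂ)).rootMultiplicity x = 1 := by
  obtain ⟨T, hroots, hT⟩ := exists_finset_roots_eq_of_palindromic hdeg hsymm hvar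
  have hp : p ≠ 0 := fun h => apply_zero_ne_zero_of_sum_abs_sub_lt hvar (by rw [h, coeff_zero])
  have hxT : x ∈ T.val := hroots ▸ (mem_roots (Polynomial.map_ne_zero hp)).2 hx
  rw [← count_roots, hroots]
  exact ⟨hT x hxT, Multiset.count_eq_one_of_mem T.nodup hxT⟩

end Palindromic

/-! ### Simple roots of compositions -/

section SimpleRoots

variable {R : Type*} [CommRing R] {p q : R[X]} {t : R}

lemma rootMultiplicity_eq_one_iff_isRoot_and_not_isRoot_derivative :
    p.rootMultiplicity t = 1 ↔ p.IsRoot t ∧ ¬ (derivative p).IsRoot t := by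
  rcases eq_or_ne p 0 with rfl | hp
  · simp
  · have hpos := rootMultiplicity_pos hp (x := t)
    have hlt := one_lt_rootMultiplicity_iff_isRoot hp (t := t)
    grind

lemma rootMultiplicity_comp_eq_one [IsDomain R] (hp : p.rootMultiplicity (q.eval t) = 1)
    (hq : ¬ (derivative q).IsRoot t) : (p.comp q).rootMultiplicity t = 1 := by
  rw [rootMultiplicity_eq_one_iff_isRoot_and_not_isRoot_derivative] at hp ⊢
  simp only [IsRoot.def, eval_comp, derivative_comp, eval_mul, mul_eq_zero] at *
  tauto

end SimpleRoots

/-! ### The Dirichlet eta function at even integers -/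

section Eta

/-- The value `η(2j) = ∑_{i ≥ 1} (-1)^(i-1) / i^(2j)` of the Dirichlet eta function, given by
Euler's formula so that it includes the regularised value `η(0) = 1/2`. -/
noncomputable def etaEven (j : ℕ) : ℝ :=
  (-1) ^ (j + 1) * (2 * π) ^ (2 * j) / (2 * (2 * j)!) * bernoulli (2 * j) *
    (1 - 2 ^ (1 - 2 * (j : ℤ)))

lemma etaEven_zero : etaEven 0 = 1 / 2 := by
  norm_num [etaEven]

lemma hasSum_etaEven {j : ℕ} (hj : j ≠ 0) :
    HasSum (fun i : ℕ => (-1 : ℝ) ^ i * (1 / ((i : ℝ) + 1) ^ (2 * j))) (etaEven j) := by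
  have hfourier := hasSum_one_div_nat_pow_mul_cos hj (x := 2⁻¹) (by norm_num)
  have hshift := ((hasSum_nat_add_iff' 1).2 hfourier).neg
  convert! hshift using 1
  · funext i
    have harg : 2 * π * ((i + 1 : ℕ) : ℝ) * 2⁻¹ = (i + 1 : ℕ) * π := by ring
    rw [harg, cos_nat_mul_pi, pow_succ]
    push_cast
    ring
  · have hhalf := bernoulliFun_eval_half (2 * j)
    rw [bernoulliFun] at hhalf
    have hpow : (2 : ℝ) ^ (1 - 2 * (j : ℤ)) = 2 / 2 ^ (2 * j) := by
      rw [zpow_sub₀ two_ne_zero, zpow_one]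
      norm_cast
    have hfirst : ∑ i ∈ range 1, 1 / (i : ℝ) ^ (2 * j) * cos (2 * π * i * 2⁻¹) = 0 := by simp [hj]
    rw [hfirst, hhalf, etaEven, hpow]
    ring

lemma etaEven_bounds {j : ℕ} (hj : j ≠ 0) :
    1 - (1 / 4) ^ j ≤ etaEven j ∧ etaEven j ≤ 1 - (1 / 4) ^ j + (1 / 9) ^ j := by
  have hanti : Antitone fun i : ℕ => 1 / ((i : ℝ) + 1) ^ (2 * j) := by
    intro i l hil
    dsimp only
    gcongr
  have hlim := (hasSum_etaEven hj).tendsto_sum_nat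
  have hlower := hanti.alternating_series_le_tendsto hlim 1
  have hupper := hanti.tendsto_le_alternating_series hlim 1
  norm_num [sum_range_succ, pow_mul] at hlower hupper
  simp only [one_div, inv_pow]
  constructor <;> linarith

lemma one_div_nine_pow_le {j : ℕ} (hj : j ≠ 0) :
    (1 / 9 : ℝ) ^ j ≤ 4 / 9 * (1 / 4) ^ j := by
  obtain ⟨j, rfl⟩ := Nat.exists_eq_succ_of_ne_zero hj
  have h : (1 / 9 : ℝ) ^ j ≤ (1 / 4) ^ j := by gcongr; norm_num
  rw [pow_succ, pow_succ]
  linarith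

lemma etaEven_monotone : Monotone etaEven := by
  refine monotone_nat_of_le_succ fun j => ?_
  obtain ⟨hlower, -⟩ := etaEven_bounds j.succ_ne_zero
  rcases eq_or_ne j 0 with rfl | hj
  · rw [etaEven_zero]
    norm_num at hlower ⊢
    linarith
  · obtain ⟨-, hupper⟩ := etaEven_bounds hj
    rw [pow_succ] at hlower
    have : (0 : ℝ) < (1 / 4) ^ j := by positivity
    linarith [one_div_nine_pow_le hj]

lemma etaEven_sub_antitone : Antitone fun j => etaEven (j + 1) - etaEven j := by
  refine antitone_nat_of_succ_le fun j => ?_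
  obtain ⟨hlower, -⟩ := etaEven_bounds j.succ_ne_zero
  obtain ⟨-, hupper⟩ := etaEven_bounds (j + 1).succ_ne_zero
  rcases eq_or_ne j 0 with rfl | hj
  · rw [etaEven_zero]
    norm_num at hlower hupper ⊢
    linarith
  · obtain ⟨-, hupper'⟩ := etaEven_bounds hj
    simp only [Nat.succ_eq_add_one, pow_succ] at hlower hupper
    have : (0 : ℝ) < (1 / 4) ^ j := by positivity
    linarith [one_div_nine_pow_le hj]

lemma etaEven_pos (j : ℕ) : 0 < etaEven j :=
  calc (0 : ℝ) < etaEven 0 := by norm_num [etaEven_zero]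
    _ ≤ etaEven j := etaEven_monotone j.zero_le

lemma etaEven_lt_one (j : ℕ) : etaEven j < 1 := by
  rcases eq_or_ne j 0 with rfl | hj
  · norm_num [etaEven_zero]
  · have : (0 : ℝ) < (1 / 4) ^ j := by positivity
    linarith [(etaEven_bounds hj).2, one_div_nine_pow_le hj]

lemma bernoulli_mul_eq_etaEven (j : ℕ) :
    (bernoulli (2 * j) : ℝ) * (1 - 2 ^ (1 - 2 * (j : ℤ))) =
      (-1) ^ (j + 1) * (2 * (2 * j)!) / (2 * π) ^ (2 * j) * etaEven j := by
  have hsq : ((-1 : ℝ) ^ (j + 1)) * (-1) ^ (j + 1) = 1 := by rw [← mul_pow]; simp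
  have hπ : (2 * π) ^ (2 * j) ≠ 0 := by positivity
  rw [etaEven]
  generalize (2 * π) ^ (2 * j) = P at *
  generalize (-1 : ℝ) ^ (j + 1) = ε at *
  field_simp
  linear_combination
    (-((bernoulli (2 * j) : ℝ) * (1 - 2 ^ (1 - 2 * (j : ℤ))))) * hsq

end Eta

/-! ### The palindromic polynomial behind `Wpoly` -/

section EtaPoly

variable {k : ℕ}

/-- The palindromic polynomial `∑ j ≤ k, η(2j) η(2k - 2j) x^j`, of which `Wpoly k` is a multiple
after the substitution `x = -z²`. -/
noncomputable def etaPoly (k : ℕ) : ℝ[X] :=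
  ∑ j ∈ range (k + 1), C (etaEven j * etaEven (k - j)) * X ^ j

lemma coeff_etaPoly {j : ℕ} (hj : j ≤ k) :
    (etaPoly k).coeff j = etaEven j * etaEven (k - j) := by
  simp only [etaPoly, finsetSum_coeff, coeff_C_mul_X_pow, sum_ite_eq, mem_range,
    Nat.lt_succ_of_le hj, if_true]

lemma natDegree_etaPoly_le (k : ℕ) : (etaPoly k).natDegree ≤ k :=
  natDegree_sum_le_of_forall_le _ _ fun _ hj =>
    (natDegree_C_mul_X_pow_le _ _).trans (Nat.lt_succ_iff.1 (mem_range.1 hj))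

lemma coeff_etaPoly_symm : ∀ j ≤ k, (etaPoly k).coeff (k - j) = (etaPoly k).coeff j := by
  intro j hj
  rw [coeff_etaPoly hj, coeff_etaPoly (Nat.sub_le k j), Nat.sub_sub_self hj, mul_comm]

lemma coeff_etaPoly_le_succ {j : ℕ} (hj : 2 * j + 1 ≤ k) :
    (etaPoly k).coeff j ≤ (etaPoly k).coeff (j + 1) := by
  obtain ⟨l, rfl⟩ : ∃ l, k = j + l + 1 := ⟨k - j - 1, by omega⟩
  rw [coeff_etaPoly (by omega), coeff_etaPoly (by omega),
    show j + l + 1 - j = l + 1 by omega, show j + l + 1 - (j + 1) = l by omega]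
  exact mul_succ_le_succ_mul_of_antitone_sub (fun i => (etaEven_pos i).le) etaEven_monotone
    etaEven_sub_antitone (by omega)

lemma sum_abs_coeff_etaPoly_sub_lt (k : ℕ) :
    ∑ j ∈ range k, |(etaPoly k).coeff (j + 1) - (etaPoly k).coeff j| <
      2 * |(etaPoly k).coeff 0| := by
  have hzero : (etaPoly k).coeff 0 = etaEven k / 2 := by
    rw [coeff_etaPoly k.zero_le, etaEven_zero, Nat.sub_zero]
    ring
  have hmid : (etaPoly k).coeff (k / 2) < etaEven k := calc
    (etaPoly k).coeff (k / 2) = etaEven (k / 2) * etaEven (k - k / 2) :=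
      coeff_etaPoly (Nat.div_le_self k 2)
    _ < 1 * etaEven (k - k / 2) := by
      gcongr
      · exact etaEven_pos _
      · exact etaEven_lt_one _
    _ ≤ etaEven k := by
      rw [one_mul]
      exact etaEven_monotone (Nat.sub_le _ _)
  rw [sum_abs_sub_of_symm_of_le_succ coeff_etaPoly_symm fun j => coeff_etaPoly_le_succ, hzero,
    abs_of_pos (half_pos (etaEven_pos k))]
  linarith

lemma coeff_Wpoly_eq_etaEven {j l : ℕ} (h : j + l ≠ 0) :
    (2 * π) ^ (2 * (j + l) - 1) * 2 ^ (2 * (j + l)) / (2 * (j + l))! *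
      ((-1) ^ j * bernoulli (2 * j) * bernoulli (2 * l) * (1 - 2 ^ (1 - 2 * (j : ℤ))) *
        (1 - 2 ^ (1 - 2 * (l : ℤ))) * (2 * (j + l)).choose (2 * j)) =
      (-1) ^ (j + l) * (2 * 2 ^ (2 * (j + l)) / π) * (etaEven j * etaEven l * (-1) ^ j) := by
  have hchoose : ((2 * (j + l)).choose (2 * j) : ℝ) =
      (2 * (j + l))! / ((2 * j)! * (2 * l)!) := by
    rw [Nat.cast_choose ℝ (by omega), show 2 * (j + l) - 2 * j = 2 * l by omega]
  have hpow : (2 * π) ^ (2 * (j + l) - 1) =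
      (2 * π) ^ (2 * j) * (2 * π) ^ (2 * l) / (2 * π) := by
    rw [eq_div_iff (by positivity), ← pow_succ, ← pow_add]
    congr 1
    omega
  calc _ = (2 * π) ^ (2 * (j + l) - 1) * 2 ^ (2 * (j + l)) / (2 * (j + l))! * ((-1) ^ j *
        ((bernoulli (2 * j) * (1 - 2 ^ (1 - 2 * (j : ℤ)))) *
          (bernoulli (2 * l) * (1 - 2 ^ (1 - 2 * (l : ℤ))))) *
        (2 * (j + l)).choose (2 * j)) := by ring
    _ = _ := by
      rw [bernoulli_mul_eq_etaEven, bernoulli_mul_eq_etaEven, hchoose, hpow]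
      have hj : (2 * π) ^ (2 * j) ≠ 0 := by positivity
      have hl : (2 * π) ^ (2 * l) ≠ 0 := by positivity
      generalize (2 * π) ^ (2 * j) = P at *
      generalize (2 * π) ^ (2 * l) = Q at *
      field_simp
      ring

lemma exists_Wpoly_eq_C_mul_comp (hk : k ≠ 0) :
    ∃ c : ℂ, c ≠ 0 ∧ Wpoly k = C c * ((etaPoly k).map (algebraMap ℝ ℂ)).comp (-X ^ 2) := by
  refine ⟨(((-1) ^ k * (2 * 2 ^ (2 * k) / π) : ℝ) : ℂ), ?_, ?_⟩
  · exact Complex.ofReal_ne_zero.2 (by positivity)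
  simp only [Wpoly, etaPoly, Polynomial.map_sum, Polynomial.sum_comp, mul_sum]
  refine sum_congr rfl fun j hj => ?_
  obtain ⟨l, rfl⟩ := Nat.exists_eq_add_of_le (Nat.lt_succ_iff.1 (mem_range.1 hj))
  have hcoeff := congrArg (fun x : ℝ => (C (x : ℂ) : ℂ[X])) (coeff_Wpoly_eq_etaEven hk)
  rw [show 2 * (j + l) - 2 * j = 2 * l by omega, Nat.add_sub_cancel_left,
    show (1 - 2 * ((j + l : ℕ) : ℤ) + 2 * j) = 1 - 2 * (l : ℤ) by push_cast; ring]
  have hX : (-X ^ 2 : ℂ[X]) ^ j = C ((-1) ^ j) * X ^ (2 * j) := by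
    rw [neg_pow, ← pow_mul, C_pow, C_neg, C_1]
  simp only [Polynomial.map_mul, Polynomial.map_pow, map_C, map_X, mul_comp, C_comp, pow_comp,
    X_comp, hX, ← mul_assoc, ← C_mul, Complex.coe_algebraMap] at hcoeff ⊢
  convert congrArg (· * (X ^ (2 * j) : ℂ[X])) hcoeff using 3
  all_goals push_cast; ring

end EtaPoly

end

/-- Every complex root of `W_k` lies on the unit circle, and all roots are simple. -/
theorem Wpoly_roots_on_unit_circle_and_simple (k : ℕ) (hk : 2 ≤ k) :
    ∀ z : ℂ, (Wpoly k).IsRoot z →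
      ‖z‖ = 1 ∧ Polynomial.rootMultiplicity z (Wpoly k) = 1 := by
  intro z hz
  obtain ⟨c, hc, hW⟩ := exists_Wpoly_eq_C_mul_comp (k := k) (by omega)
  set P := (etaPoly k).map (algebraMap ℝ ℂ)
  have hroot : P.IsRoot (-z ^ 2) := by simpa [hW, hc] using hz
  obtain ⟨hnorm, hsimple⟩ := norm_eq_one_and_rootMultiplicity_eq_one_of_palindromic
    (natDegree_etaPoly_le k) coeff_etaPoly_symm (sum_abs_coeff_etaPoly_sub_lt k) hroot
  have hz_norm : ‖z‖ = 1 := by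
    rwa [norm_neg, norm_pow, pow_eq_one_iff_of_nonneg (norm_nonneg z) two_ne_zero] at hnorm
  have hz_ne : z ≠ 0 := norm_ne_zero_iff.1 (by simp [hz_norm])
  refine ⟨hz_norm, ?_⟩
  rw [hW, ← Polynomial.count_roots, Polynomial.roots_C_mul _ hc, Polynomial.count_roots]
  exact rootMultiplicity_comp_eq_one (by simpa using hsimple) (by simpa using hz_ne)
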